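/- Let H(ℓ,n,k;·) and B(ℓ,n,k;·) denote the multivariate hypergeometric and multinomial p.m.f.s of the colour counts when sampling k balls without and with replacement from an urn with n balls of c colours with composition ℓ, where every ℓ_j ≥ 1. Then, for any such ℓ and all 1 ≤ k ≤ n/2, D(H(ℓ,n,k;·) ‖ B(ℓ,n,k;·)) ≤ ((c−1)/2)( log(n/(n−k)) − k/(n−1) ) + (k(2n+1)/(12n(n−1)(n−k))) Σ_{j=1}^c (n/ℓ_j) + (1/360)( 1/(n−k)^3 − 1/n^3 ) Σ_{j=1}^c (n^3/ℓ_j^3). -/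

import Mathlib

open MeasureTheory
open scoped ENNReal

open Classical in
/-- The relative entropy `D(P‖P') = Σ_{x : P(x)>0} P(x) log (P(x)/P'(x))` between two
probability mass functions on a discrete set (natural logarithm). -/
noncomputable def relEntPMF {α : Type*} (P P' : α → ℝ) : ℝ :=
  ∑' x, if 0 < P x then P x * Real.log (P x / P' x) else 0

/-- The multivariate hypergeometric p.m.f. `H(ℓ,n,k;s) = (∏ⱼ C(ℓⱼ,sⱼ)) / C(n,k)` of the
colour counts when sampling `k` balls *without replacement* from an urn of `n` balls of
`c` colours with composition `ℓ`; it is a p.m.f. on count vectors `s` with `Σⱼ sⱼ = k`. -/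
noncomputable def hyperPMF (c n k : ℕ) (ℓ : Fin c → ℕ)
    (s : {s : Fin c → ℕ // ∑ j, s j = k}) : ℝ :=
  ((∏ j, (ℓ j).choose (s.1 j) : ℕ) : ℝ) / (n.choose k : ℝ)

/-- The multinomial p.m.f. `B(ℓ,n,k;s) = (k choose s₁,…,s_c) ∏ⱼ (ℓⱼ/n)^{sⱼ}` of the colour
counts when sampling `k` balls *with replacement* from the same urn. -/
noncomputable def multinomPMF (c n k : ℕ) (ℓ : Fin c → ℕ)
    (s : {s : Fin c → ℕ // ∑ j, s j = k}) : ℝ :=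
  (Nat.multinomial Finset.univ s.1 : ℝ) * ∏ j, ((ℓ j : ℝ) / (n : ℝ)) ^ (s.1 j)

namespace JGK
open Real Filter Topology Finset

/-- cubic upper bound for the logarithm -/
lemma log_one_add_le_cubic {t : ℝ} (ht : -1 < t) :
    Real.log (1 + t) ≤ t - t ^ 2 / 2 + t ^ 3 / 3 := by
  set f : ℝ → ℝ := fun t => t - t ^ 2 / 2 + t ^ 3 / 3 - Real.log (1 + t) with hf
  have hd : ∀ x : ℝ, -1 < x → HasDerivAt f (x ^ 3 / (1 + x)) x := by
    intro x hx
    have h1 : (1 + x) ≠ 0 := by linarith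
    have h := (((hasDerivAt_id x).sub ((hasDerivAt_pow 2 x).div_const 2)).add
      ((hasDerivAt_pow 3 x).div_const 3)).sub (((hasDerivAt_id x).const_add 1).log h1)
    refine h.congr_deriv ?_
    simp
    field_simp
    ring
  have h0 : f 0 = 0 := by simp [hf]
  suffices 0 ≤ f t by simp only [hf] at this; linarith
  rw [← h0]
  rcases le_total 0 t with h | h
  · have hm : MonotoneOn f (Set.Ici 0) := by
      apply monotoneOn_of_hasDerivWithinAt_nonneg (f' := fun x => x ^ 3 / (1 + x)) (convex_Ici 0)
      · intro x hx
        exact (hd x (by have : (0:ℝ) ≤ x := hx; linarith)).continuousAt.continuousWithinAt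
      · intro x hx
        rw [interior_Ici] at hx
        exact (hd x (by have : (0:ℝ) < x := hx; linarith)).hasDerivWithinAt
      · intro x hx
        rw [interior_Ici] at hx
        have : (0:ℝ) < x := hx
        positivity
    exact hm (Set.mem_Ici.2 le_rfl) h h
  · have hm : AntitoneOn f (Set.Ioc (-1) 0) := by
      apply antitoneOn_of_hasDerivWithinAt_nonpos (f' := fun x => x ^ 3 / (1 + x))
        (convex_Ioc (-1) 0)
      · intro x hx
        exact (hd x hx.1).continuousAt.continuousWithinAt
      · intro x hx
        rw [interior_Ioc] at hx
        exact (hd x hx.1).hasDerivWithinAt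
      · intro x hx
        rw [interior_Ioc] at hx
        have h1 : 0 < 1 + x := by linarith [hx.1]
        have h2 : x ^ 3 ≤ 0 := by
          have := hx.2
          nlinarith [sq_nonneg x]
        exact div_nonpos_of_nonpos_of_nonneg h2 h1.le
    exact hm ⟨ht, h⟩ ⟨by norm_num, le_rfl⟩ h

/-- a function increasing to zero at infinity is nonpositive -/
lemma nonpos_of_deriv {f f' : ℝ → ℝ} (hd : ∀ x, 0 < x → HasDerivAt f (f' x) x)
    (h0 : ∀ x, 0 < x → 0 ≤ f' x) (hl : Tendsto f atTop (𝓝 0)) {x : ℝ} (hx : 0 < x) : f x ≤ 0 := by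
  have hm : MonotoneOn f (Set.Ioi 0) := by
    apply monotoneOn_of_hasDerivWithinAt_nonneg (f' := f') (convex_Ioi 0)
    · intro x hx
      exact (hd x hx).continuousAt.continuousWithinAt
    · intro x hx
      rw [interior_Ioi] at hx
      exact (hd x hx).hasDerivWithinAt
    · intro x hx
      rw [interior_Ioi] at hx
      exact h0 x hx
  refine ge_of_tendsto hl ?_
  filter_upwards [eventually_ge_atTop x] with y hy
  exact hm hx (lt_of_lt_of_le hx hy) hy

lemma tendsto_inv_pow_add (a : ℝ) (m : ℕ) (hm : m ≠ 0) :
    Tendsto (fun x : ℝ => ((x + a) ^ m)⁻¹) atTop (𝓝 0) :=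
  tendsto_inv_atTop_zero.comp
    ((tendsto_pow_atTop hm).comp (tendsto_atTop_add_const_right _ a tendsto_id))

lemma tendsto_log_diff (a b : ℝ) :
    Tendsto (fun x : ℝ => Real.log (x + a) - Real.log (x + b)) atTop (𝓝 0) := by
  have h : ∀ a : ℝ, Tendsto (fun x : ℝ => Real.log (x + a) - Real.log x) atTop (𝓝 0) := by
    intro a
    have h1 : Tendsto (fun x : ℝ => Real.log (1 + a * x⁻¹)) atTop (𝓝 0) := by
      have : Tendsto (fun x : ℝ => 1 + a * x⁻¹) atTop (𝓝 (1 + a * 0)) :=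
        (tendsto_inv_atTop_zero.const_mul a).const_add 1
      have h2 := (Real.continuousAt_log (x := 1 + a * 0) (by norm_num)).tendsto.comp this
      simpa [Function.comp_def] using h2
    refine h1.congr' ?_
    filter_upwards [eventually_gt_atTop 0, eventually_gt_atTop (-a)] with x hx hx2
    rw [← Real.log_div (by linarith) hx.ne']
    congr 1
    field_simp
  have := (h a).sub (h b)
  simpa using this

noncomputable def dd (x : ℝ) : ℝ := (x + 1 / 2) * (Real.log (x + 1) - Real.log x) - 1
    - 1 / 12 * (x⁻¹ - (x + 1)⁻¹) + 1 / 360 * ((x ^ 3)⁻¹ - ((x + 1) ^ 3)⁻¹)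

noncomputable def dd1 (x : ℝ) : ℝ := (Real.log (x + 1) - Real.log x) - 1 / 2 * (x⁻¹ + (x + 1)⁻¹)
    + 1 / 12 * ((x ^ 2)⁻¹ - ((x + 1) ^ 2)⁻¹) - 1 / 120 * ((x ^ 4)⁻¹ - ((x + 1) ^ 4)⁻¹)

lemma hasDerivAt_inv_pow (a x : ℝ) (m : ℕ) (hx : 0 < x + a) :
    HasDerivAt (fun x : ℝ => ((x + a) ^ m)⁻¹) (-(m : ℝ) * ((x + a) ^ (m + 1))⁻¹) x := by
  have h := (((hasDerivAt_id x).add_const a).pow m).inv (pow_ne_zero m hx.ne')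
  refine h.congr_deriv ?_
  rcases m with _ | m
  · simp
  · have := hx.ne'
    simp
    field_simp
    ring

lemma hasDerivAt_log_add (a x : ℝ) (hx : 0 < x + a) :
    HasDerivAt (fun x : ℝ => Real.log (x + a)) ((x + a)⁻¹) x := by
  simpa using ((hasDerivAt_id x).add_const a).log hx.ne'

lemma dd1_nonpos {x : ℝ} (hx : 0 < x) : dd1 x ≤ 0 := by
  refine nonpos_of_deriv (f := dd1) (f' := fun x => ((x * (x + 1))⁻¹) ^ 4 / 6
    + ((x * (x + 1))⁻¹) ^ 5 / 30) ?_ ?_ ?_ hx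
  · intro x hx
    have hx0 : 0 < x + 0 := by simpa using hx
    have hx1 : 0 < x + 1 := by linarith
    have h := ((((hasDerivAt_log_add 1 x hx1).sub (hasDerivAt_log_add 0 x hx0)).sub
      (((hasDerivAt_inv_pow 0 x 1 hx0).add (hasDerivAt_inv_pow 1 x 1 hx1)).const_mul (1/2))).add
      (((hasDerivAt_inv_pow 0 x 2 hx0).sub (hasDerivAt_inv_pow 1 x 2 hx1)).const_mul (1/12))).sub
      (((hasDerivAt_inv_pow 0 x 4 hx0).sub (hasDerivAt_inv_pow 1 x 4 hx1)).const_mul (1/120))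
    have h2 := h.congr_deriv (g' := ((x * (x + 1))⁻¹) ^ 4 / 6 + ((x * (x + 1))⁻¹) ^ 5 / 30) (by
      have := hx1.ne'
      simp
      field_simp
      ring)
    refine h2.congr_of_eventuallyEq (Filter.Eventually.of_forall ?_)
    intro y
    simp [dd1]
  · intro x hx
    positivity
  · have hp := fun a m hm => tendsto_inv_pow_add a m hm
    have h := (((tendsto_log_diff 1 0).sub (((hp 0 1 one_ne_zero).add (hp 1 1 one_ne_zero)).const_mul (1/2))).add
      (((hp 0 2 two_ne_zero).sub (hp 1 2 two_ne_zero)).const_mul (1/12))).sub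
      (((hp 0 4 four_ne_zero).sub (hp 1 4 four_ne_zero)).const_mul (1/120))
    simp only [add_zero, pow_one, sub_zero, mul_zero] at h
    exact h

lemma dd_antitone : AntitoneOn dd (Set.Ioi 0) := by
  have hd : ∀ x : ℝ, 0 < x → HasDerivAt dd (dd1 x) x := by
    intro x hx
    have hx0 : 0 < x + 0 := by simpa using hx
    have hx1 : 0 < x + 1 := by linarith
    have h := (((((hasDerivAt_id x).add_const (1/2)).mul ((hasDerivAt_log_add 1 x hx1).sub (hasDerivAt_log_add 0 x hx0))).sub_const 1).sub
      (((hasDerivAt_inv_pow 0 x 1 hx0).sub (hasDerivAt_inv_pow 1 x 1 hx1)).const_mul (1/12))).add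
      (((hasDerivAt_inv_pow 0 x 3 hx0).sub (hasDerivAt_inv_pow 1 x 3 hx1)).const_mul (1/360))
    have h2 := h.congr_deriv (g' := dd1 x) (by
      have := hx1.ne'
      simp [dd1]
      field_simp
      ring)
    refine h2.congr_of_eventuallyEq (Filter.Eventually.of_forall ?_)
    intro y
    simp [dd]
  apply antitoneOn_of_hasDerivWithinAt_nonpos (f' := dd1) (convex_Ioi 0)
  · intro x hx
    exact (hd x hx).continuousAt.continuousWithinAt
  · intro x hx
    rw [interior_Ioi] at hx
    exact (hd x hx).hasDerivWithinAt
  · intro x hx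
    rw [interior_Ioi] at hx
    exact dd1_nonpos hx

/-- log(1+1/x) upper bound used for the factorials of `n`. -/
lemma log_succ_le {x : ℝ} (hx : 0 < x) :
    (x + 1 / 2) * (Real.log (x + 1) - Real.log x) ≤ 1 + 1 / 12 * (x⁻¹ - (x + 1)⁻¹) := by
  have key : (Real.log (x + 1) - Real.log x) -
      (1 + 1 / 12 * (x⁻¹ - (x + 1)⁻¹)) * ((x + 1/2) ^ 1)⁻¹ ≤ 0 := by
    refine nonpos_of_deriv (f := fun x => (Real.log (x + 1) - Real.log x) -
      (1 + 1 / 12 * (x⁻¹ - (x + 1)⁻¹)) * ((x + 1/2) ^ 1)⁻¹)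
      (f' := fun x => 1 / 12 * (x⁻¹ - (x + 1)⁻¹) ^ 2 * ((x + 1/2)⁻¹) ^ 2 / 2) ?_ ?_ ?_ hx
    · intro x hx
      have hx0 : 0 < x + 0 := by simpa using hx
      have hx1 : 0 < x + 1 := by linarith
      have hx2 : 0 < x + 1 / 2 := by linarith
      have h := ((hasDerivAt_log_add 1 x hx1).sub (hasDerivAt_log_add 0 x hx0)).sub
        (((((hasDerivAt_inv_pow 0 x 1 hx0).sub (hasDerivAt_inv_pow 1 x 1 hx1)).const_mul (1/12)).const_add 1).mul
          (hasDerivAt_inv_pow (1/2) x 1 hx2))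
      have h2 := h.congr_deriv (g' := 1 / 12 * (x⁻¹ - (x + 1)⁻¹) ^ 2 * ((x + 1/2)⁻¹) ^ 2 / 2) (by
        have := hx1.ne'
        have h3 : x * 2 + 1 ≠ 0 := by linarith
        have h3 : 2 * x + 1 ≠ 0 := by linarith
        simp
        field_simp
        ring)
      refine h2.congr_of_eventuallyEq (Filter.Eventually.of_forall ?_)
      intro y
      simp
    · intro x hx
      positivity
    · have hp := fun a m hm => tendsto_inv_pow_add a m hm
      have h := (tendsto_log_diff 1 0).sub
        (((((hp 0 1 one_ne_zero).sub (hp 1 1 one_ne_zero)).const_mul (1/12)).const_add 1).mul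
          (hp (1/2) 1 one_ne_zero))
      simp only [add_zero, sub_zero, mul_zero] at h
      simpa using h
  have h2 : 0 < x + 1 / 2 := by linarith
  rw [pow_one, sub_nonpos, ← div_eq_mul_inv, le_div_iff₀ h2] at key
  linarith

noncomputable def St (x : ℝ) : ℝ :=
  x * Real.log x - x + 1 / 2 * Real.log x + 1 / 12 * x⁻¹ - 1 / 360 * (x ^ 3)⁻¹

lemma St_succ {x : ℝ} : St (x + 1) - St x - Real.log (x + 1) = dd x := by
  simp only [St, dd]
  ring

lemma tendsto_St (x : ℝ) (hx : 0 ≤ x) :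
    Tendsto (fun N : ℕ => St (x + N + 1) - x * Real.log N
      - (N * Real.log N - N + 3 / 2 * Real.log N)) atTop (𝓝 0) := by
  have hN : Tendsto (fun N : ℕ => (N : ℝ)) atTop atTop := tendsto_natCast_atTop_atTop
  have h1 := (Real.tendsto_mul_log_one_add_div_atTop (x + 1))
  have h2 := (tendsto_log_diff (x + 1) 0).const_mul (x + 1 + 1 / 2)
  have h3 := ((tendsto_inv_pow_add (x + 1) 1 one_ne_zero).const_mul (1/12)).sub
    ((tendsto_inv_pow_add (x + 1) 3 three_ne_zero).const_mul (1/360))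
  have h := ((((h1.add h2).add h3).sub_const (x + 1))).comp hN
  have e : x + 1 + (x + 1 + 1 / 2) * 0 + (1 / 12 * 0 - 1 / 360 * 0) - (x + 1) = (0 : ℝ) := by ring
  rw [e] at h
  refine h.congr' ?_
  filter_upwards [eventually_gt_atTop 0] with N hN0
  have hN1 : (0 : ℝ) < N := by exact_mod_cast hN0
  have e2 : Real.log (1 + (x + 1) / N) = Real.log (N + (x + 1)) - Real.log N := by
    rw [← Real.log_div (by positivity) hN1.ne']
    congr 1
    field_simp
  simp only [Function.comp_apply, e2, St, add_zero, pow_one]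
  rw [show x + N + 1 = N + (x + 1) by ring]
  ring

open Real.BohrMollerup in
lemma logGammaSeq_diff_le {μ l : ℝ} (hμ : 0 < μ) (hl : μ ≤ l) (N : ℕ) :
    logGammaSeq (l + 1) N - logGammaSeq (μ + 1) N ≤ St l - St μ +
      ((l - μ) * Real.log N - St (l + N + 1) + St (μ + N + 1)) := by
  have hs : ∀ x : ℝ, ∑ m ∈ range (N + 1), Real.log (x + 1 + m) =
      St (x + N + 1) - St x - ∑ m ∈ range (N + 1), dd (x + m) := by
    intro x
    have := Finset.sum_range_sub (fun m : ℕ => St (x + m)) (N + 1)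
    simp only [Nat.cast_zero, add_zero, Nat.cast_add, Nat.cast_one] at this
    rw [add_assoc x N 1, ← this, ← Finset.sum_sub_distrib]
    refine Finset.sum_congr rfl fun m _ => ?_
    rw [← St_succ]
    rw [show x + m + 1 = x + 1 + m by ring, show x + (m + 1) = x + 1 + m by ring]
    ring
  have hd : ∑ m ∈ range (N + 1), dd (l + m) ≤ ∑ m ∈ range (N + 1), dd (μ + m) := by
    refine Finset.sum_le_sum fun m _ => ?_
    have : (0 : ℝ) ≤ m := Nat.cast_nonneg m
    exact dd_antitone (Set.mem_Ioi.2 (by linarith)) (Set.mem_Ioi.2 (by linarith)) (by linarith)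
  rw [logGammaSeq, logGammaSeq, hs, hs]
  linarith

open Real.BohrMollerup in
lemma logGammaSeq_taylor {μ x : ℝ} (hμ : 0 < μ) (hx : 0 ≤ x) (N : ℕ) :
    logGammaSeq (μ + 1) N + (Real.log N - ∑ m ∈ range (N + 1), (μ + 1 + m)⁻¹) * (x - μ)
      + 1 / 2 * (∑ m ∈ range (N + 1), ((μ + 1 + m) ^ 2)⁻¹) * (x - μ) ^ 2
      - 1 / 3 * (∑ m ∈ range (N + 1), ((μ + 1 + m) ^ 3)⁻¹) * (x - μ) ^ 3
      ≤ logGammaSeq (x + 1) N := by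
  have h : ∑ m ∈ range (N + 1), Real.log (x + 1 + m) ≤
      ∑ m ∈ range (N + 1), (Real.log (μ + 1 + m) + (μ + 1 + m)⁻¹ * (x - μ)
        - 1 / 2 * (((μ + 1 + m) ^ 2)⁻¹ * (x - μ) ^ 2)
        + 1 / 3 * (((μ + 1 + m) ^ 3)⁻¹ * (x - μ) ^ 3)) := by
    refine Finset.sum_le_sum fun m _ => ?_
    have hm : (0 : ℝ) ≤ m := Nat.cast_nonneg m
    have hp : 0 < μ + 1 + m := by linarith
    have e : x + 1 + m = (μ + 1 + m) * (1 + (x - μ) / (μ + 1 + m)) := by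
      field_simp
      ring
    have ht : -1 < (x - μ) / (μ + 1 + m) := by
      rw [lt_div_iff₀ hp]
      linarith
    rw [e, Real.log_mul hp.ne' (by linarith)]
    have := log_one_add_le_cubic ht
    have e2 : (x - μ) / (μ + 1 + m) - ((x - μ) / (μ + 1 + m)) ^ 2 / 2
        + ((x - μ) / (μ + 1 + m)) ^ 3 / 3 = (μ + 1 + m)⁻¹ * (x - μ)
        - 1 / 2 * (((μ + 1 + m) ^ 2)⁻¹ * (x - μ) ^ 2)
        + 1 / 3 * (((μ + 1 + m) ^ 3)⁻¹ * (x - μ) ^ 3) := by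
      field_simp
    linarith
  simp only [Finset.sum_add_distrib, Finset.sum_sub_distrib, ← Finset.mul_sum,
    ← Finset.sum_mul] at h
  rw [logGammaSeq, logGammaSeq]
  linarith

lemma A_lower {μ : ℝ} (hμ : 0 < μ) (N : ℕ) :
    (μ⁻¹ - 1 / 2 * (μ ^ 2)⁻¹) - (μ + N + 1)⁻¹
      ≤ ∑ m ∈ range (N + 1), ((μ + 1 + m) ^ 2)⁻¹ := by
  have := Finset.sum_range_sub
    (fun m : ℕ => - ((μ + m)⁻¹ - 1 / 2 * ((μ + m) ^ 2)⁻¹)) (N + 1)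
  have h2 : ∑ m ∈ range (N + 1), (- ((μ + (m + 1 : ℕ))⁻¹ - 1 / 2 * ((μ + (m + 1 : ℕ)) ^ 2)⁻¹)
      - - ((μ + m)⁻¹ - 1 / 2 * ((μ + m) ^ 2)⁻¹)) ≤ ∑ m ∈ range (N + 1), ((μ + 1 + m) ^ 2)⁻¹ := by
    refine Finset.sum_le_sum fun m _ => ?_
    have hm : (0 : ℝ) ≤ m := Nat.cast_nonneg m
    have hp : 0 < μ + m := by linarith
    push_cast
    rw [show μ + 1 + m = μ + m + 1 by ring, show μ + (m + 1) = μ + m + 1 by ring]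
    generalize μ + m = y at hp
    have : (y + 1) ≠ 0 := by positivity
    have e : ((y + 1) ^ 2)⁻¹ - (-((y + 1)⁻¹ - 1 / 2 * ((y + 1) ^ 2)⁻¹) - -(y⁻¹ - 1 / 2 * (y ^ 2)⁻¹))
        = 1 / 2 * (y ^ 2)⁻¹ * ((y + 1) ^ 2)⁻¹ := by
      field_simp
      ring
    have : 0 ≤ 1 / 2 * (y ^ 2)⁻¹ * ((y + 1) ^ 2)⁻¹ := by positivity
    linarith
  simp only [Nat.cast_zero, add_zero, Nat.cast_add, Nat.cast_one] at this h2
  have h3 : 0 ≤ ((μ + (N + 1)) ^ 2)⁻¹ := by positivity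
  rw [add_assoc μ N 1]
  linarith

lemma B_upper {μ : ℝ} (hμ : 0 < μ) (N : ℕ) :
    ∑ m ∈ range (N + 1), ((μ + 1 + m) ^ 3)⁻¹ ≤ 1 / 2 * (μ ^ 2)⁻¹ := by
  have := Finset.sum_range_sub
    (fun m : ℕ => - (1 / 2 * ((μ + m) ^ 2)⁻¹)) (N + 1)
  have h2 : ∑ m ∈ range (N + 1), ((μ + 1 + m) ^ 3)⁻¹ ≤
      ∑ m ∈ range (N + 1), (- (1 / 2 * ((μ + (m + 1 : ℕ)) ^ 2)⁻¹) - -(1 / 2 * ((μ + m) ^ 2)⁻¹)) := by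
    refine Finset.sum_le_sum fun m _ => ?_
    have hm : (0 : ℝ) ≤ m := Nat.cast_nonneg m
    have hp : 0 < μ + m := by linarith
    push_cast
    rw [show μ + 1 + m = μ + m + 1 by ring, show μ + (m + 1) = μ + m + 1 by ring]
    generalize μ + m = y at hp
    have : (y + 1) ≠ 0 := by positivity
    have e : -(1 / 2 * ((y + 1) ^ 2)⁻¹) - -(1 / 2 * (y ^ 2)⁻¹) - ((y + 1) ^ 3)⁻¹
        = 1 / 2 * (3 * y + 1) * (y ^ 2)⁻¹ * ((y + 1) ^ 3)⁻¹ := by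
      field_simp
      ring
    have : 0 ≤ 1 / 2 * (3 * y + 1) * (y ^ 2)⁻¹ * ((y + 1) ^ 3)⁻¹ := by positivity
    linarith
  simp only [Nat.cast_zero, add_zero, Nat.cast_add, Nat.cast_one] at this h2
  have h3 : 0 ≤ ((μ + (N + 1)) ^ 2)⁻¹ := by positivity
  linarith

open Real.BohrMollerup in
lemma tendsto_lgs (m : ℕ) : Tendsto (logGammaSeq ((m : ℝ) + 1)) atTop
    (𝓝 (Real.log (m.factorial : ℝ))) := by
  have := tendsto_log_gamma (x := (m : ℝ) + 1) (by positivity)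
  rwa [Real.Gamma_nat_eq_factorial] at this

open Real.BohrMollerup in
lemma expect_bound {T : Type*} (s : Finset T) (w : T → ℝ) (X : T → ℕ) (l : ℕ) (μ V K Kp : ℝ)
    (hw : ∀ t ∈ s, 0 ≤ w t) (hw1 : ∑ t ∈ s, w t = 1)
    (hm : ∑ t ∈ s, w t * ((X t : ℝ) - μ) = 0)
    (hV : ∑ t ∈ s, w t * ((X t : ℝ) - μ) ^ 2 = V)
    (hK : ∑ t ∈ s, w t * ((X t : ℝ) - μ) ^ 3 = K)
    (hμ : 0 < μ) (hl : μ ≤ l) (hKp : K ≤ Kp) (hKp0 : 0 ≤ Kp) :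
    Real.log (l.factorial : ℝ) - ∑ t ∈ s, w t * Real.log ((X t).factorial : ℝ) ≤
      St l - St μ - 1 / 2 * (μ⁻¹ - 1 / 2 * (μ ^ 2)⁻¹) * V + Kp * (μ ^ 2)⁻¹ / 6 := by
  have hV0 : 0 ≤ V := by
    rw [← hV]
    exact Finset.sum_nonneg fun t ht => mul_nonneg (hw t ht) (sq_nonneg _)
  have hL : Tendsto (fun N => logGammaSeq ((l : ℝ) + 1) N
      - ∑ t ∈ s, w t * logGammaSeq ((X t : ℝ) + 1) N) atTop
      (𝓝 (Real.log (l.factorial : ℝ) - ∑ t ∈ s, w t * Real.log ((X t).factorial : ℝ))) :=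
    (tendsto_lgs l).sub (tendsto_finsetSum _ fun t _ => (tendsto_lgs (X t)).const_mul _)
  have hR : Tendsto (fun N : ℕ => St l - St μ + (((St (μ + N + 1) - μ * Real.log N
      - (N * Real.log N - N + 3 / 2 * Real.log N))) - ((St (l + N + 1) - l * Real.log N
      - (N * Real.log N - N + 3 / 2 * Real.log N))))
      - 1 / 2 * (μ⁻¹ - 1 / 2 * (μ ^ 2)⁻¹ - (((N : ℝ) + (μ + 1)) ^ 1)⁻¹) * V
      + Kp * (μ ^ 2)⁻¹ / 6) atTop
      (𝓝 (St l - St μ + (0 - 0) - 1 / 2 * (μ⁻¹ - 1 / 2 * (μ ^ 2)⁻¹ - 0) * V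
        + Kp * (μ ^ 2)⁻¹ / 6)) := by
    have hi := (tendsto_inv_pow_add (μ + 1) 1 one_ne_zero).comp
      (tendsto_natCast_atTop_atTop (R := ℝ))
    exact ((((tendsto_St μ hμ.le).sub (tendsto_St l (Nat.cast_nonneg l))).const_add _).sub
      (((hi.const_sub _).const_mul _).mul_const V)).add_const _
  simp only [sub_zero, add_zero] at hR
  refine le_of_tendsto_of_tendsto' hL hR fun N => ?_
  have h1 := logGammaSeq_diff_le hμ hl N
  have h2 : ∑ t ∈ s, w t * (logGammaSeq (μ + 1) N
      + (Real.log N - ∑ m ∈ range (N + 1), (μ + 1 + m)⁻¹) * ((X t : ℝ) - μ)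
      + 1 / 2 * (∑ m ∈ range (N + 1), ((μ + 1 + m) ^ 2)⁻¹) * ((X t : ℝ) - μ) ^ 2
      - 1 / 3 * (∑ m ∈ range (N + 1), ((μ + 1 + m) ^ 3)⁻¹) * ((X t : ℝ) - μ) ^ 3)
      ≤ ∑ t ∈ s, w t * logGammaSeq ((X t : ℝ) + 1) N :=
    Finset.sum_le_sum fun t ht => mul_le_mul_of_nonneg_left
      (logGammaSeq_taylor hμ (Nat.cast_nonneg _) N) (hw t ht)
  have hA := A_lower hμ N
  have hB := B_upper hμ N
  have hB0 : 0 ≤ ∑ m ∈ range (N + 1), ((μ + 1 + m) ^ 3)⁻¹ :=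
    Finset.sum_nonneg fun m _ => by positivity
  generalize (∑ m ∈ range (N + 1), ((μ + 1 + m) ^ 3)⁻¹) = B at *
  generalize (∑ m ∈ range (N + 1), ((μ + 1 + m) ^ 2)⁻¹) = A at *
  generalize (Real.log N - ∑ m ∈ range (N + 1), (μ + 1 + m)⁻¹) = C at *
  generalize logGammaSeq (μ + 1) N = L at *
  have e : ∑ t ∈ s, w t * (L + C * ((X t : ℝ) - μ) + 1 / 2 * A * ((X t : ℝ) - μ) ^ 2
      - 1 / 3 * B * ((X t : ℝ) - μ) ^ 3) = L + 1 / 2 * A * V - 1 / 3 * B * K := by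
    have : ∀ t, w t * (L + C * ((X t : ℝ) - μ) + 1 / 2 * A * ((X t : ℝ) - μ) ^ 2
      - 1 / 3 * B * ((X t : ℝ) - μ) ^ 3) = L * w t + C * (w t * ((X t : ℝ) - μ))
        + 1 / 2 * A * (w t * ((X t : ℝ) - μ) ^ 2) - 1 / 3 * B * (w t * ((X t : ℝ) - μ) ^ 3) := by
      intro t
      ring
    simp only [this, Finset.sum_add_distrib, Finset.sum_sub_distrib, ← Finset.mul_sum, hw1, hm,
      hV, hK]
    ring
  rw [e] at h2
  have hBK : B * K ≤ 1 / 2 * (μ ^ 2)⁻¹ * Kp :=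
    (mul_le_mul_of_nonneg_left hKp hB0).trans (mul_le_mul_of_nonneg_right hB hKp0)
  have hAV := mul_le_mul_of_nonneg_right hA hV0
  rw [show (N : ℝ) + (μ + 1) = μ + N + 1 by ring, pow_one]
  linarith

/-- factorial ratio for `n`. -/
lemma log_fact_diff (a k : ℕ) (ha : 1 ≤ a) :
    Real.log (a.factorial : ℝ) - Real.log ((a + k).factorial : ℝ) ≤
      (a * Real.log a - a + 1 / 2 * Real.log a + 1 / 12 * (a : ℝ)⁻¹) -
      ((a + k : ℕ) * Real.log (a + k : ℕ) - (a + k : ℕ) + 1 / 2 * Real.log (a + k : ℕ)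
        + 1 / 12 * ((a + k : ℕ) : ℝ)⁻¹) := by
  induction k with
  | zero => simp
  | succ k ih =>
    have hp : (0 : ℝ) < (a + k : ℕ) := by exact_mod_cast (by omega)
    have h := log_succ_le hp
    rw [← add_assoc, Nat.factorial_succ, Nat.cast_mul, Real.log_mul (by positivity) (by positivity)]
    push_cast at *
    linarith

lemma sum_piAntidiag_eq_coeff {c : ℕ} (f : Fin c → PowerSeries ℕ) (k : ℕ) :
    ∑ s ∈ piAntidiag (univ : Finset (Fin c)) k, ∏ i, PowerSeries.coeff (s i) (f i)
      = PowerSeries.coeff k (∏ i, f i) := by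
  rw [PowerSeries.coeff_prod]
  refine Finset.sum_bij' (fun s _ => Finsupp.equivFunOnFinite.symm s) (fun l _ => ⇑l) ?_ ?_ ?_ ?_ ?_
  · intro s hs
    simpa [mem_finsuppAntidiag] using hs
  · intro l hl
    simpa [mem_finsuppAntidiag] using hl
  · intro s hs
    simp
  · intro l hl
    ext
    simp
  · intro s hs
    simp

lemma coeff_one_add_X_pow' (m k : ℕ) :
    PowerSeries.coeff k ((1 + PowerSeries.X : PowerSeries ℕ) ^ m) = m.choose k := by
  have := Polynomial.coeff_one_add_X_pow ℕ m k
  rw [← Polynomial.coeff_coe] at this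
  simpa using this

lemma choose_moment {c : ℕ} (n k : ℕ) (ℓ : Fin c → ℕ) (hℓ : ∑ j, ℓ j = n) (j : Fin c) (r : ℕ) :
    (∑ s ∈ piAntidiag (univ : Finset (Fin c)) k, (∏ i, (ℓ i).choose (s i)) * (s j).choose r)
      * n.choose r = (ℓ j).choose r * (n.choose k * k.choose r) := by
  rcases lt_or_ge (ℓ j) r with hr | hr
  · rw [Nat.choose_eq_zero_of_lt hr]
    have : ∑ s ∈ piAntidiag (univ : Finset (Fin c)) k,
        (∏ i, (ℓ i).choose (s i)) * (s j).choose r = 0 := by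
      refine Finset.sum_eq_zero fun s _ => ?_
      rcases lt_or_ge (s j) r with h | h
      · rw [Nat.choose_eq_zero_of_lt h, mul_zero]
      · rw [Finset.prod_eq_zero (mem_univ j) (Nat.choose_eq_zero_of_lt (by omega)), zero_mul]
    rw [this]
    simp
  set Q : PowerSeries ℕ := 1 + PowerSeries.X with hQ
  set f : Fin c → PowerSeries ℕ := fun i =>
    if i = j then (ℓ j).choose r • (PowerSeries.X ^ r * Q ^ (ℓ j - r)) else Q ^ (ℓ i) with hf
  have h1 : ∀ s : Fin c → ℕ, (∏ i, (ℓ i).choose (s i)) * (s j).choose r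
      = ∏ i, PowerSeries.coeff (s i) (f i) := by
    intro s
    rw [← Finset.mul_prod_erase univ _ (mem_univ j), ← Finset.mul_prod_erase univ
      (fun i => PowerSeries.coeff (s i) (f i)) (mem_univ j)]
    have h2 : ∏ i ∈ univ.erase j, PowerSeries.coeff (s i) (f i)
        = ∏ i ∈ univ.erase j, (ℓ i).choose (s i) := by
      refine Finset.prod_congr rfl fun i hi => ?_
      rw [hf]
      simp only [(Finset.mem_erase.1 hi).1, if_false]
      exact coeff_one_add_X_pow' _ _
    rw [h2, mul_right_comm]
    congr 1
    simp only [hf, if_true, map_nsmul, PowerSeries.coeff_X_pow_mul', smul_eq_mul]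
    split_ifs with h
    · rw [hQ, coeff_one_add_X_pow', Nat.choose_mul h]
    · rw [Nat.choose_eq_zero_of_lt (by omega : s j < r)]
      simp
  simp only [h1]
  rw [sum_piAntidiag_eq_coeff]
  have h3 : ∏ i, f i = (ℓ j).choose r • (PowerSeries.X ^ r * Q ^ (n - r)) := by
    rw [← Finset.mul_prod_erase univ _ (mem_univ j)]
    have h2 : ∏ i ∈ univ.erase j, f i = Q ^ (∑ i ∈ univ.erase j, ℓ i) := by
      rw [← Finset.prod_pow_eq_pow_sum]
      refine Finset.prod_congr rfl fun i hi => ?_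
      rw [hf]
      simp only [(Finset.mem_erase.1 hi).1, if_false]
    rw [h2]
    have h4 : n - r = (ℓ j - r) + ∑ i ∈ univ.erase j, ℓ i := by
      have := Finset.add_sum_erase univ ℓ (mem_univ j)
      omega
    rw [h4, pow_add]
    simp only [hf, if_true]
    rw [smul_mul_assoc, mul_assoc]
  rw [h3, map_nsmul, PowerSeries.coeff_X_pow_mul', smul_eq_mul]
  split_ifs with h
  · rw [hQ, coeff_one_add_X_pow', Nat.choose_mul h]
    ring
  · rw [Nat.choose_eq_zero_of_lt (by omega : k < r)]
    simp

lemma cast_choose_three (a : ℕ) : (a.choose 3 : ℝ) = a * (a - 1) * (a - 2) / 6 := by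
  rcases lt_or_ge a 2 with h | h
  · interval_cases a <;> simp [Nat.choose]
  · have h1 := Nat.choose_succ_right_eq a 2
    have h2 : ((a.choose 3 * 3 : ℕ) : ℝ) = ((a.choose 2 * (a - 2) : ℕ) : ℝ) := by exact_mod_cast h1
    push_cast [Nat.cast_sub h, Nat.cast_choose_two] at h2
    linarith

/-- hypergeometric weight as a real function on all count vectors -/
noncomputable def hw {c : ℕ} (n k : ℕ) (ℓ : Fin c → ℕ) (s : Fin c → ℕ) : ℝ :=
  ((∏ j, (ℓ j).choose (s j) : ℕ) : ℝ) / (n.choose k : ℝ)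

lemma real_moment {c : ℕ} (n k : ℕ) (hkn : k ≤ n) (ℓ : Fin c → ℕ) (hℓ : ∑ j, ℓ j = n)
    (j : Fin c) (r : ℕ) :
    (∑ s ∈ piAntidiag (univ : Finset (Fin c)) k, hw n k ℓ s * ((s j).choose r : ℝ)) * n.choose r
      = (ℓ j).choose r * k.choose r := by
  have h := choose_moment n k ℓ hℓ j r
  have h' : (∑ s ∈ piAntidiag (univ : Finset (Fin c)) k, ((∏ i, (ℓ i).choose (s i) : ℕ) : ℝ) * ((s j).choose r : ℝ))
      * n.choose r = (ℓ j).choose r * (n.choose k * k.choose r) := by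
    exact_mod_cast h
  have hp : (n.choose k : ℝ) ≠ 0 := by exact_mod_cast (Nat.choose_pos hkn).ne'
  have e : ∑ s ∈ piAntidiag (univ : Finset (Fin c)) k, hw n k ℓ s * ((s j).choose r : ℝ) =
      (∑ s ∈ piAntidiag (univ : Finset (Fin c)) k, ((∏ i, (ℓ i).choose (s i) : ℕ) : ℝ) * ((s j).choose r : ℝ)) / n.choose k := by
    rw [Finset.sum_div]
    refine Finset.sum_congr rfl fun s _ => ?_
    rw [hw]
    ring
  rw [e, div_mul_eq_mul_div, h']
  field_simp

lemma moments {c : ℕ} (n k : ℕ) (hk1 : 1 ≤ k) (hk2 : 2 * k ≤ n) (ℓ : Fin c → ℕ)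
    (hℓpos : ∀ j, 1 ≤ ℓ j) (hℓ : ∑ j, ℓ j = n) (j : Fin c) (hjn : ℓ j + 1 ≤ n) :
    let P := piAntidiag (univ : Finset (Fin c)) k
    let μ : ℝ := ℓ j * (n - k) / n
    ∑ s ∈ P, hw n k ℓ s = 1 ∧
    ∑ s ∈ P, hw n k ℓ s * (s j : ℝ) = ℓ j * k / n ∧
    ∑ s ∈ P, hw n k ℓ s * (((ℓ j - s j : ℕ) : ℝ) - μ) = 0 ∧
    ∑ s ∈ P, hw n k ℓ s * (((ℓ j - s j : ℕ) : ℝ) - μ) ^ 2 = μ * k * (n - ℓ j) / (n * (n - 1)) ∧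
    ∑ s ∈ P, hw n k ℓ s * (((ℓ j - s j : ℕ) : ℝ) - μ) ^ 3 ≤
      (ℓ j) ^ 2 * (n - k) * k / (2 * n ^ 2 * (n - 1)) := by
  intro P μ
  have hkn : k ≤ n := by omega
  have hn2 : (2 : ℝ) ≤ n := by exact_mod_cast (by omega : 2 ≤ n)
  have hn0 : (n : ℝ) ≠ 0 := by linarith
  have hn1 : (n : ℝ) - 1 ≠ 0 := by linarith
  have m0 := real_moment n k hkn ℓ hℓ j 0
  have m1 := real_moment n k hkn ℓ hℓ j 1
  have m2 := real_moment n k hkn ℓ hℓ j 2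
  have m3 := real_moment n k hkn ℓ hℓ j 3
  have m3' : k < 3 → ∑ s ∈ P, hw n k ℓ s * ((s j).choose 3 : ℝ) = 0 := by
    intro h3
    refine Finset.sum_eq_zero fun s hs => ?_
    have : s j ≤ k := by
      rw [← (mem_piAntidiag.1 hs).1]
      exact Finset.single_le_sum (f := s) (fun _ _ => Nat.zero_le _) (mem_univ j)
    rw [Nat.choose_eq_zero_of_lt (by omega)]
    simp
  simp only [Nat.choose_zero_right, Nat.choose_one_right, Nat.cast_one, mul_one] at m0 m1
  have m2r : ∑ s ∈ P, hw n k ℓ s * ((s j).choose 2 : ℝ)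
      = ℓ j * (ℓ j - 1) * (k * (k - 1)) / (2 * (n * (n - 1))) := by
    rw [eq_div_iff (by positivity)]
    simp only [Nat.cast_choose_two] at m2 ⊢
    linarith
  have m1r : ∑ s ∈ P, hw n k ℓ s * (s j : ℝ) = ℓ j * k / n := by
    rw [eq_div_iff hn0]
    exact m1
  have hX : ∀ s, ∀ r : ℕ, hw n k ℓ s * (((ℓ j - s j : ℕ) : ℝ) - μ) ^ r
      = hw n k ℓ s * ((ℓ j : ℝ) - s j - μ) ^ r := by
    intro s r
    rcases le_or_gt (s j) (ℓ j) with h | h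
    · rw [Nat.cast_sub h]
    · have : hw n k ℓ s = 0 := by
        rw [hw, Finset.prod_eq_zero (mem_univ j) (Nat.choose_eq_zero_of_lt h)]
        simp
      simp [this]
  have hX1 := fun s => hX s 1
  simp only [pow_one] at hX1
  have e1 : ∀ s : Fin c → ℕ, hw n k ℓ s * ((ℓ j : ℝ) - s j - μ) =
      (ℓ j - μ) * hw n k ℓ s - hw n k ℓ s * (s j : ℝ) := by
    intro s; ring
  have e2 : ∀ s : Fin c → ℕ, hw n k ℓ s * ((ℓ j : ℝ) - s j - μ) ^ 2 =
      (ℓ j - μ) ^ 2 * hw n k ℓ s + (1 - 2 * (ℓ j - μ)) * (hw n k ℓ s * (s j : ℝ))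
        + 2 * (hw n k ℓ s * ((s j).choose 2 : ℝ)) := by
    intro s
    rw [Nat.cast_choose_two]
    ring
  have e3 : ∀ s : Fin c → ℕ, hw n k ℓ s * ((ℓ j : ℝ) - s j - μ) ^ 3 =
      (ℓ j - μ) ^ 3 * hw n k ℓ s
        + (-3 * (ℓ j - μ) ^ 2 + 3 * (ℓ j - μ) - 1) * (hw n k ℓ s * (s j : ℝ))
        + (6 * (ℓ j - μ) - 6) * (hw n k ℓ s * ((s j).choose 2 : ℝ))
        - 6 * (hw n k ℓ s * ((s j).choose 3 : ℝ)) := by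
    intro s
    rw [Nat.cast_choose_two, cast_choose_three]
    ring
  have hd : (ℓ j : ℝ) - μ = ℓ j * k / n := by
    simp only [μ]
    field_simp
    ring
  refine ⟨m0, m1r, ?_, ?_, ?_⟩
  · simp only [hX1, e1, Finset.sum_sub_distrib, ← Finset.mul_sum]
    rw [m0, m1r, hd]
    ring
  · simp only [hX, e2, Finset.sum_add_distrib, ← Finset.mul_sum]
    rw [m0, m1r, m2r, hd]
    simp only [μ]
    field_simp
    ring
  · simp only [hX, e3, Finset.sum_add_distrib, Finset.sum_sub_distrib, ← Finset.mul_sum]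
    rw [m0, m1r, m2r, hd]
    have hl1 : (1 : ℝ) ≤ ℓ j := by exact_mod_cast hℓpos j
    have hln : (ℓ j : ℝ) + 1 ≤ n := by exact_mod_cast hjn
    have hk1' : (1 : ℝ) ≤ k := by exact_mod_cast hk1
    have hk2' : 2 * (k : ℝ) ≤ n := by exact_mod_cast hk2
    rcases lt_or_ge n 3 with h3 | h3
    · have hn : n = 2 := by omega
      have hk : k = 1 := by omega
      have hl : ℓ j = 1 := by have := hℓpos j; omega
      rw [m3' (by omega), hn, hk, hl]
      norm_num
    · have h3' : (3 : ℝ) ≤ n := by exact_mod_cast h3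
      have hn2' : (n : ℝ) - 2 ≠ 0 := by linarith
      have m3r : ∑ s ∈ P, hw n k ℓ s * ((s j).choose 3 : ℝ)
          = ℓ j * (ℓ j - 1) * (ℓ j - 2) * (k * (k - 1) * (k - 2)) / (6 * (n * (n - 1) * (n - 2))) := by
        rw [eq_div_iff (by positivity)]
        simp only [cast_choose_three] at m3 ⊢
        linarith
      rw [m3r]
      generalize (ℓ j : ℝ) = l at *
      generalize (n : ℝ) = n' at *
      generalize (k : ℝ) = k' at *
      have key : 2 * (n' - l) * (n' - 2 * l) * (2 * k' - n') ≤ l * n' * (n' - 2) := by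
        have hr : 0 ≤ l * n' * (n' - 2) := by
          apply mul_nonneg <;> nlinarith
        rcases le_or_gt (2 * l) n' with h | h
        · have : 0 ≤ 2 * (n' - l) * (n' - 2 * l) * (n' - 2 * k') := by
            apply mul_nonneg (mul_nonneg _ _) _ <;> linarith
          linarith
        · have h5 : 2 * (n' - l) * (2 * l - n') ≤ l * n' := by
            nlinarith [sq_nonneg (4 * l - 5 / 2 * n'), sq_nonneg n']
          have h6 : 2 * (n' - l) * (2 * l - n') * (n' - 2 * k') ≤ l * n' * (n' - 2) := by
            apply mul_le_mul h5 (by linarith) (by linarith) (by nlinarith)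
          linarith
      have pos : 0 < n' ^ 3 * (n' - 1) * (n' - 2) := by
        have : 0 < n' - 1 := by linarith
        have : 0 < n' - 2 := by linarith
        positivity
      have eL : (l * k' / n') ^ 3 * 1 + (-3 * (l * k' / n') ^ 2 + 3 * (l * k' / n') - 1) * (l * k' / n') +
          (6 * (l * k' / n') - 6) * (l * (l - 1) * (k' * (k' - 1)) / (2 * (n' * (n' - 1)))) -
          6 * (l * (l - 1) * (l - 2) * (k' * (k' - 1) * (k' - 2)) / (6 * (n' * (n' - 1) * (n' - 2))))
          = l * (n' - k') * k' * (2 * (n' - l) * (n' - 2 * l) * (2 * k' - n'))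
            / (2 * (n' ^ 3 * (n' - 1) * (n' - 2))) := by
        field_simp
        ring
      have eR : l ^ 2 * (n' - k') * k' / (2 * n' ^ 2 * (n' - 1)) =
          l * (n' - k') * k' * (l * n' * (n' - 2)) / (2 * (n' ^ 3 * (n' - 1) * (n' - 2))) := by
        field_simp
      rw [eL, eR]
      apply div_le_div_of_nonneg_right _ (by positivity)
      apply mul_le_mul_of_nonneg_left key
      apply mul_nonneg (mul_nonneg _ _) _ <;> linarith

lemma per_colour {c : ℕ} (n k : ℕ) (hk1 : 1 ≤ k) (hk2 : 2 * k ≤ n) (ℓ : Fin c → ℕ)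
    (hℓpos : ∀ j, 1 ≤ ℓ j) (hℓ : ∑ j, ℓ j = n) (j : Fin c) (hjn : ℓ j + 1 ≤ n) :
    ∑ s ∈ piAntidiag (univ : Finset (Fin c)) k, hw n k ℓ s *
      (Real.log ((ℓ j).factorial : ℝ) - Real.log ((ℓ j - s j).factorial : ℝ)
        - s j * Real.log (ℓ j : ℝ)) ≤
      ℓ j * ((n - k) / n * Real.log ((n : ℝ) / (n - k)) - k / n + k / (2 * n * (n - 1)))
      + (1 / 2 * Real.log ((n : ℝ) / (n - k)) - k / (2 * (n - 1)) - k / (6 * (n - 1) * (n - k)))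
      + ((k : ℝ) * (2 * n + 1)) / (12 * n * ((n : ℝ) - 1) * ((n : ℝ) - k)) * (n / ℓ j)
      + (1 / 360 : ℝ) * (1 / ((n : ℝ) - k) ^ 3 - 1 / (n : ℝ) ^ 3) * ((n : ℝ) ^ 3 / (ℓ j : ℝ) ^ 3)
      := by
  obtain ⟨h0, h1, hm, hV, hK⟩ := moments n k hk1 hk2 ℓ hℓpos hℓ j hjn
  have hl1 : (1 : ℝ) ≤ ℓ j := by exact_mod_cast hℓpos j
  have hk1' : (1 : ℝ) ≤ k := by exact_mod_cast hk1
  have hk2' : 2 * (k : ℝ) ≤ n := by exact_mod_cast hk2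
  have hn : (0 : ℝ) < n := by linarith
  have hn1 : (0 : ℝ) < (n : ℝ) - 1 := by linarith
  have hnk : (0 : ℝ) < (n : ℝ) - k := by linarith
  have hl0 : (0 : ℝ) < ℓ j := by linarith
  have hb := expect_bound (piAntidiag (univ : Finset (Fin c)) k) (hw n k ℓ)
    (fun s => ℓ j - s j) (ℓ j) (ℓ j * (n - k) / n) _ _ _
    (fun s _ => by unfold hw; positivity) h0 hm hV rfl (by positivity)
    (by rw [div_le_iff₀ hn]; apply mul_le_mul_of_nonneg_left _ hl0.le; linarith) hK
    (by positivity)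
  have e : ∑ s ∈ piAntidiag (univ : Finset (Fin c)) k, hw n k ℓ s *
      (Real.log ((ℓ j).factorial : ℝ) - Real.log ((ℓ j - s j).factorial : ℝ)
        - s j * Real.log (ℓ j : ℝ)) = Real.log ((ℓ j).factorial : ℝ)
      - ∑ s ∈ piAntidiag (univ : Finset (Fin c)) k,
        hw n k ℓ s * Real.log ((ℓ j - s j).factorial : ℝ) - ℓ j * k / n * Real.log (ℓ j) := by
    have : ∀ s : Fin c → ℕ, hw n k ℓ s *
      (Real.log ((ℓ j).factorial : ℝ) - Real.log ((ℓ j - s j).factorial : ℝ)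
        - s j * Real.log (ℓ j : ℝ)) = Real.log ((ℓ j).factorial : ℝ) * hw n k ℓ s
        - hw n k ℓ s * Real.log ((ℓ j - s j).factorial : ℝ)
        - Real.log (ℓ j) * (hw n k ℓ s * (s j : ℝ)) := by
      intro s
      ring
    simp only [this, Finset.sum_sub_distrib, ← Finset.mul_sum]
    rw [h0, h1]
    ring
  rw [e]
  have hlog : Real.log (ℓ j * (n - k) / n) = Real.log (ℓ j) - Real.log ((n : ℝ) / (n - k)) := by
    rw [← Real.log_div hl0.ne' (by positivity)]
    congr 1
    field_simp
  refine (sub_le_sub_right hb _).trans (le_of_eq ?_)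
  simp only [St, hlog]
  generalize Real.log (ℓ j) = L
  generalize Real.log ((n : ℝ) / (n - k)) = Λ
  field_simp
  ring

lemma log_choose {a b : ℕ} (h : b ≤ a) : Real.log (a.choose b : ℝ) =
    Real.log (a.factorial : ℝ) - Real.log (b.factorial : ℝ) - Real.log ((a - b).factorial : ℝ) := by
  rw [← Nat.choose_mul_factorial_mul_factorial h]
  have := (Nat.choose_pos h).ne'
  push_cast
  rw [Real.log_mul (by positivity) (by positivity), Real.log_mul (by positivity) (by positivity)]
  ring

lemma log_ratio {c n k : ℕ} (hkn : k ≤ n) (hn : 0 < n) (ℓ : Fin c → ℕ) (hℓpos : ∀ j, 1 ≤ ℓ j)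
    (s : {s : Fin c → ℕ // ∑ j, s j = k}) (hs : 0 < hyperPMF c n k ℓ s) :
    Real.log (hyperPMF c n k ℓ s / multinomPMF c n k ℓ s) =
      ∑ j, (Real.log ((ℓ j).factorial : ℝ) - Real.log ((ℓ j - s.1 j).factorial : ℝ)
        - s.1 j * Real.log (ℓ j : ℝ))
      + (Real.log ((n - k).factorial : ℝ) - Real.log (n.factorial : ℝ) + k * Real.log n) := by
  have hle : ∀ j, s.1 j ≤ ℓ j := by
    intro j
    by_contra h
    rw [hyperPMF, Finset.prod_eq_zero (mem_univ j) (Nat.choose_eq_zero_of_lt (by omega))] at hs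
    simp at hs
  have hc : ∀ j, ((ℓ j).choose (s.1 j) : ℝ) ≠ 0 := fun j => by
    exact_mod_cast (Nat.choose_pos (hle j)).ne'
  have hn' : (n : ℝ) ≠ 0 := by exact_mod_cast hn.ne'
  have hl' : ∀ j, (ℓ j : ℝ) ≠ 0 := fun j => by
    have := hℓpos j
    exact_mod_cast (by omega : ℓ j ≠ 0)
  have hnk : (n.choose k : ℝ) ≠ 0 := by exact_mod_cast (Nat.choose_pos hkn).ne'
  have hM : (Nat.multinomial univ s.1 : ℝ) ≠ 0 := by
    exact_mod_cast (Nat.multinomial_pos univ s.1).ne'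
  have hP : ∏ j, ((ℓ j : ℝ) / (n : ℝ)) ^ (s.1 j) ≠ 0 :=
    Finset.prod_ne_zero_iff.2 fun j _ => pow_ne_zero _ (div_ne_zero (hl' j) hn')
  have hlM : Real.log (Nat.multinomial univ s.1 : ℝ) = Real.log (k.factorial : ℝ)
      - ∑ j, Real.log ((s.1 j).factorial : ℝ) := by
    have h := Nat.multinomial_spec univ s.1
    rw [s.2] at h
    rw [← h]
    push_cast
    rw [Real.log_mul (Finset.prod_ne_zero_iff.2 fun j _ => by positivity) hM,
      Real.log_prod (fun j _ => by positivity)]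
    ring
  have hlP : Real.log (∏ j, ((ℓ j : ℝ) / (n : ℝ)) ^ (s.1 j)) =
      ∑ j, (s.1 j : ℝ) * Real.log (ℓ j) - k * Real.log n := by
    rw [Real.log_prod (fun j _ => pow_ne_zero _ (div_ne_zero (hl' j) hn'))]
    simp only [Real.log_pow, Real.log_div (hl' _) hn', mul_sub, Finset.sum_sub_distrib,
      ← Finset.sum_mul]
    congr 2
    exact_mod_cast s.2
  have hmz : multinomPMF c n k ℓ s ≠ 0 := mul_ne_zero hM hP
  rw [Real.log_div hs.ne' hmz, multinomPMF, Real.log_mul hM hP, hyperPMF, Nat.cast_prod,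
    Real.log_div (Finset.prod_ne_zero_iff.2 fun j _ => hc j) hnk,
    Real.log_prod (fun j _ => hc j), hlM, hlP, log_choose hkn]
  simp only [log_choose (hle _), Finset.sum_sub_distrib]
  ring

lemma relEnt_eq {c n k : ℕ} (hkn : k ≤ n) (hn : 0 < n) (ℓ : Fin c → ℕ) (hℓpos : ∀ j, 1 ≤ ℓ j) :
    relEntPMF (hyperPMF c n k ℓ) (multinomPMF c n k ℓ) =
      ∑ s ∈ piAntidiag (univ : Finset (Fin c)) k, hw n k ℓ s *
      (∑ j, (Real.log ((ℓ j).factorial : ℝ) - Real.log ((ℓ j - s j).factorial : ℝ)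
        - s j * Real.log (ℓ j : ℝ))
      + (Real.log ((n - k).factorial : ℝ) - Real.log (n.factorial : ℝ) + k * Real.log n)) := by
  set F : (Fin c → ℕ) → ℝ := fun s => hw n k ℓ s *
      (∑ j, (Real.log ((ℓ j).factorial : ℝ) - Real.log ((ℓ j - s j).factorial : ℝ)
        - s j * Real.log (ℓ j : ℝ))
      + (Real.log ((n - k).factorial : ℝ) - Real.log (n.factorial : ℝ) + k * Real.log n)) with hF
  have h1 : relEntPMF (hyperPMF c n k ℓ) (multinomPMF c n k ℓ)
      = ∑' s : {s : Fin c → ℕ // ∑ j, s j = k}, F s.1 := by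
    unfold relEntPMF
    refine tsum_congr fun s => ?_
    split_ifs with h
    · rw [log_ratio hkn hn ℓ hℓpos s h]
      rfl
    · have h0 : 0 ≤ hyperPMF c n k ℓ s := by unfold hyperPMF; positivity
      have : hw n k ℓ s.1 = 0 := le_antisymm (not_lt.1 h) h0
      simp [hF, this]
  rw [h1]
  have h2 := Finset.tsum_subtype (piAntidiag (univ : Finset (Fin c)) k) F
  rw [← h2]
  exact (Equiv.subtypeEquivRight (p := fun s : Fin c → ℕ => ∑ j, s j = k)
    (q := fun s => s ∈ piAntidiag (univ : Finset (Fin c)) k) (fun s => by simp)).tsum_eq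
    (fun x : {s // s ∈ piAntidiag (univ : Finset (Fin c)) k} => F x.1)

end JGK

/-- **The Johnson–Gavalakis–Kontoyiannis composition-dependent relative entropy bound
between sampling without and with replacement.** For an urn of `n` balls of `c ≥ 2` colours
with composition `ℓ` (each `ℓⱼ ≥ 1`) and any `1 ≤ k ≤ n/2`,
`D(H(ℓ,n,k;·) ‖ B(ℓ,n,k;·)) ≤ ((c−1)/2)(log(n/(n−k)) − k/(n−1))
  + (k(2n+1)/(12n(n−1)(n−k))) Σⱼ n/ℓⱼ + (1/360)(1/(n−k)³ − 1/n³) Σⱼ n³/ℓⱼ³`. -/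
theorem jgk_sampling_relEntropy {c n k : ℕ} (hc : 2 ≤ c)
    (hk1 : 1 ≤ k) (hk2 : 2 * k ≤ n)
    (ℓ : Fin c → ℕ) (hℓpos : ∀ j, 1 ≤ ℓ j) (hℓ : ∑ j, ℓ j = n) :
    relEntPMF (hyperPMF c n k ℓ) (multinomPMF c n k ℓ) ≤
      ((c : ℝ) - 1) / 2 * (Real.log ((n : ℝ) / ((n : ℝ) - k)) - (k : ℝ) / ((n : ℝ) - 1)) +
        ((k : ℝ) * (2 * n + 1)) / (12 * n * ((n : ℝ) - 1) * ((n : ℝ) - k)) *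
          ∑ j, ((n : ℝ) / (ℓ j : ℝ)) +
        (1 / 360 : ℝ) * (1 / ((n : ℝ) - k) ^ 3 - 1 / (n : ℝ) ^ 3) *
          ∑ j, ((n : ℝ) ^ 3 / (ℓ j : ℝ) ^ 3) := by
  have hkn : k ≤ n := by omega
  have hk1' : (1 : ℝ) ≤ k := by exact_mod_cast hk1
  have hk2' : 2 * (k : ℝ) ≤ n := by exact_mod_cast hk2
  have hn : (0 : ℝ) < n := by linarith
  have hn1 : (0 : ℝ) < (n : ℝ) - 1 := by linarith
  have hnk : (0 : ℝ) < (n : ℝ) - k := by linarith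
  have hc' : (2 : ℝ) ≤ c := by exact_mod_cast hc
  have hjn : ∀ j, ℓ j + 1 ≤ n := by
    intro j
    have : Nontrivial (Fin c) := Fin.nontrivial_iff_two_le.2 hc
    obtain ⟨i, hij⟩ := exists_ne j
    have h1 := Finset.add_sum_erase Finset.univ ℓ (Finset.mem_univ j)
    have h2 : ℓ i ≤ ∑ x ∈ Finset.univ.erase j, ℓ x :=
      Finset.single_le_sum (f := ℓ) (fun _ _ => Nat.zero_le _)
        (Finset.mem_erase.2 ⟨hij, Finset.mem_univ i⟩)
    have h3 := hℓpos i
    omega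
  have hw1 := (JGK.moments n k hk1 hk2 ℓ hℓpos hℓ ⟨0, by omega⟩ (hjn _)).1
  rw [JGK.relEnt_eq hkn (by omega) ℓ hℓpos]
  simp only [mul_add _ (Finset.sum _ _), Finset.sum_add_distrib, ← Finset.sum_mul, Finset.mul_sum]
  rw [hw1, Finset.sum_comm]
  have hsum := Finset.sum_le_sum fun j (_ : j ∈ (Finset.univ : Finset (Fin c))) =>
    JGK.per_colour n k hk1 hk2 ℓ hℓpos hℓ j (hjn j)
  have hℓ' : ∑ j, (ℓ j : ℝ) = n := by exact_mod_cast hℓ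
  simp only [Finset.sum_add_distrib, ← Finset.sum_mul, hℓ', Finset.sum_const, Finset.card_univ,
    Fintype.card_fin, nsmul_eq_mul, ← Finset.mul_sum] at hsum
  simp only [← Finset.mul_sum] at hsum ⊢
  have hfac := JGK.log_fact_diff (n - k) k (by omega)
  rw [Nat.sub_add_cancel hkn, Nat.cast_sub hkn] at hfac
  have hL : Real.log ((n : ℝ) - k) = Real.log n - Real.log ((n : ℝ) / (n - k)) := by
    rw [Real.log_div hn.ne' hnk.ne']
    ring
  rw [hL] at hfac
  have hlast : 1 / 12 * ((n : ℝ) - k)⁻¹ - 1 / 12 * (n : ℝ)⁻¹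
      ≤ c * (k / (6 * ((n : ℝ) - 1) * (n - k))) := by
    have e1 : 1 / 12 * ((n : ℝ) - k)⁻¹ - 1 / 12 * (n : ℝ)⁻¹ = k / (n - k) * (1 / (12 * n)) := by
      field_simp
      ring
    have e2 : c * (k / (6 * ((n : ℝ) - 1) * (n - k))) = k / (n - k) * (c / (6 * ((n : ℝ) - 1))) := by
      field_simp
    rw [e1, e2]
    apply mul_le_mul_of_nonneg_left _ (by positivity)
    rw [div_le_div_iff₀ (by positivity) (by positivity)]
    nlinarith
  have e3 : (n : ℝ) * ((n - k) / n * Real.log ((n : ℝ) / (n - k)) - k / n + k / (2 * n * (n - 1)))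
      = (n - k) * Real.log ((n : ℝ) / (n - k)) - k + k / (n - 1) / 2 := by
    field_simp
  have e4 : (k : ℝ) / (2 * (n - 1)) = k / (n - 1) / 2 := by
    field_simp
  rw [e3, e4] at hsum
  linarith
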